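/- arXiv:1808.06632 — 6 statements merged into one kernel-verified Lean document; each statement's English description precedes it below -/
import Mathlib

section
/- Let a < 0, h > 0 and v ≥ 0 be real numbers. Then the sum Σ_{k=0}^{∞} max(0, v + k·a·h) · h (which has only finitely many nonzero terms) satisfies Σ_{k=0}^{∞} max(0, v + k·a·h) · h ≤ v²/(−2a) + v·h − a·h²/2. -/
/-!
Write `x k = v + k·a·h` for the uncut velocities. The potential `Φ x = (max 0 (x - a·h))² / (-2a)`
dominates the braking displacement slot by slot: `max 0 (x k) · h ≤ Φ (x k) - Φ (x (k+1))`, since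
`Φ (x (k+1)) = (max 0 (x k))² / (-2a)`. Telescoping, every partial sum is at most `Φ v`, which is
exactly the claimed bound. Finiteness holds because `x k ≤ 0` as soon as `k ≥ v / (-a·h)`.
-/

/-- One step of the telescoping, multiplied out by `-2a`. -/
lemma braking_step (a h x : ℝ) (ha : a < 0) (hh : 0 < h) :
    (-2 * a) * (max 0 x * h) + (max 0 x) ^ 2 ≤ (max 0 (x - a * h)) ^ 2 := by
  have hah : a * h < 0 := mul_neg_of_neg_of_pos ha hh
  rcases le_total x 0 with hx | hx
  · rw [max_eq_left hx]
    nlinarith [sq_nonneg (max 0 (x - a * h))]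
  · rw [max_eq_right hx, max_eq_right (by linarith)]
    nlinarith [sq_nonneg (a * h)]

lemma braking_partial_sum (a h v : ℝ) (ha : a < 0) (hh : 0 < h) (hv : 0 ≤ v) (n : ℕ) :
    (-2 * a) * (∑ k ∈ Finset.range n, max 0 (v + (k : ℝ) * a * h) * h)
      + (max 0 (v + (n : ℝ) * a * h - a * h)) ^ 2 ≤ (v - a * h) ^ 2 := by
  induction n with
  | zero =>
    have hah : a * h < 0 := mul_neg_of_neg_of_pos ha hh
    simp [max_eq_right (show 0 ≤ v - a * h by linarith)]
  | succ n ih =>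
    have hstep := braking_step a h (v + (n : ℝ) * a * h) ha hh
    have hx : v + ((n + 1 : ℕ) : ℝ) * a * h - a * h = v + (n : ℝ) * a * h := by
      push_cast; ring
    rw [Finset.sum_range_succ, hx, mul_add]
    linarith

/-- For `a < 0`, `h > 0`, `v ≥ 0`, the discrete maximal-braking
displacement `∑ k, max 0 (v + k·a·h) · h` has only finitely many nonzero terms
and is at most `v² / (-2a) + v·h - a·h²/2`. -/
theorem discrete_braking_displacement_upper_bound (a h v : ℝ)
    (ha : a < 0) (hh : 0 < h) (hv : 0 ≤ v) :
    {k : ℕ | max 0 (v + (k : ℝ) * a * h) * h ≠ 0}.Finite ∧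
    (∑' k : ℕ, max 0 (v + (k : ℝ) * a * h) * h) ≤
      v ^ 2 / (-2 * a) + v * h - a * h ^ 2 / 2 := by
  have hah : a * h < 0 := mul_neg_of_neg_of_pos ha hh
  constructor
  · obtain ⟨N, hN⟩ := exists_nat_ge (v / (-(a * h)))
    rw [div_le_iff₀ (by linarith)] at hN
    refine (Set.finite_lt_nat N).subset fun k hk => ?_
    by_contra hkN
    have hNk : (N : ℝ) ≤ k := by exact_mod_cast not_lt.mp hkN
    refine hk ?_
    rw [max_eq_left (by nlinarith), zero_mul]
  · refine Real.tsum_le_of_sum_range_le (fun k => by positivity) fun n => ?_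
    have hsum := braking_partial_sum a h v ha hh hv n
    have hbound : v ^ 2 / (-2 * a) + v * h - a * h ^ 2 / 2 = (v - a * h) ^ 2 / (-2 * a) := by
      have := ha.ne
      field_simp
      ring
    rw [hbound, le_div_iff₀ (by linarith)]
    nlinarith [sq_nonneg (max 0 (v + (n : ℝ) * a * h - a * h))]
end

section
/- Let a < 0, h > 0 and v ≥ 0 be real numbers. Then Σ_{k=0}^{∞} max(0, v + k·a·h) · h ≥ v²/(−2a). -/
/-!
The function `w ↦ w² / (-2a)`, the continuous stopping distance from velocity `w`, is a potential:
writing `w k = max 0 (v + k·a·h)`, one slot covers at least the drop in stopping distance,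
`(w k)² - (w (k+1))² ≤ -2a · (w k · h)` (lemma `sq_sub_sq_le_slot`). Since the vehicle is at rest
after finitely many slots, the series is a finite sum, and summing the slot inequality telescopes.
-/

/-- The velocity `max 0 x`, followed by `max 0 (x + a·h)` one slot later: the distance covered in
the slot, scaled by `-2a`, is at least the decrease of the squared velocity. -/
lemma sq_sub_sq_le_slot (a h x : ℝ) (ha : a < 0) (hh : 0 < h) :
    (max 0 x) ^ 2 - (max 0 (x + a * h)) ^ 2 ≤ -2 * a * (max 0 x * h) := by
  have hah : a * h < 0 := mul_neg_of_neg_of_pos ha hh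
  rcases le_total x 0 with hx | hx
  · rw [max_eq_left hx, max_eq_left (by linarith)]
    simp
  · rw [max_eq_right hx]
    rcases le_total (x + a * h) 0 with hy | hy
    · rw [max_eq_left hy]
      nlinarith
    · rw [max_eq_right hy]
      nlinarith [sq_nonneg (a * h)]

/-- For `a < 0`, `h > 0`, `v ≥ 0`, the discrete maximal-braking
displacement `∑ k, max 0 (v + k·a·h) · h` is at least the continuous stopping
distance `v² / (-2a)`. -/
theorem discrete_braking_displacement_lower_bound (a h v : ℝ)
    (ha : a < 0) (hh : 0 < h) (hv : 0 ≤ v) :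
    v ^ 2 / (-2 * a) ≤ ∑' k : ℕ, max 0 (v + (k : ℝ) * a * h) * h := by
  have hah : a * h < 0 := mul_neg_of_neg_of_pos ha hh
  obtain ⟨N, hN⟩ := exists_nat_ge (v / -(a * h))
  rw [div_le_iff₀ (by linarith)] at hN
  have hrest : ∀ k : ℕ, N ≤ k → max 0 (v + (k : ℝ) * a * h) = 0 := by
    intro k hk
    have hk' : (N : ℝ) ≤ k := by exact_mod_cast hk
    exact max_eq_left (by nlinarith)
  rw [tsum_eq_sum (s := Finset.range N) (fun k hk => by
    rw [hrest k (by simpa using hk), zero_mul])]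
  rw [div_le_iff₀ (by linarith), mul_comm, Finset.mul_sum]
  have htel := Finset.sum_range_sub' (fun k : ℕ => (max 0 (v + (k : ℝ) * a * h)) ^ 2) N
  simp only [hrest N le_rfl, Nat.cast_zero, zero_mul, add_zero, max_eq_right hv] at htel
  calc v ^ 2 = v ^ 2 - 0 ^ 2 := by ring
    _ = _ := htel.symm
    _ ≤ _ := Finset.sum_le_sum fun k _ => by
      have hslot := sq_sub_sq_le_slot a h (v + (k : ℝ) * a * h) ha hh
      have hnext : v + ((k + 1 : ℕ) : ℝ) * a * h = v + (k : ℝ) * a * h + a * h := by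
        push_cast; ring
      rw [hnext]
      exact hslot
end

section
/- Let a < 0, T_r ≥ 0, s_min ≥ 0, v_max ≥ 0, v_l ≥ 0 and v_f ≥ 0 be real numbers, and define s_hv(v_f, v_l) := (if v_f > v_l then (v_f² − v_l²)/(−2a) else 0) + v_max·T_r + s_min. Let u, w : [0, ∞) → ℝ be measurable with: 0 ≤ u(t) ≤ v_max for t ∈ [0, T_r]; u(t) ≤ max(0, v_f + a·(t − T_r)) for t ≥ T_r; and w(t) ≥ max(0, v_l + a·t) for all t ≥ 0. If the initial gap g satisfies g ≥ s_hv(v_f, v_l), then for every T ≥ 0, g + ∫₀ᵀ w(t) dt − ∫₀ᵀ u(t) dt ≥ s_min. (Hence a follower maintaining separation s_hv from its leader never comes within distance s_min of the leader, even if the leader brakes maximally.) -/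
/-!
Write `p_v(t) = max 0 (v + a t)` for the speed at time `t` of a vehicle braking maximally from
speed `v`. Along this profile the quantity `x - p²/(2a)` (position plus remaining stopping
distance) is conserved, so the distance travelled up to time `S` is
`(v² - p_v(S)²) / (-2a)` (`integral_brake`).

Past the reaction time, the follower has travelled at most `v_max T_r` plus the braking distance
from `v_f` over a duration `S = T - T_r`, while the leader has travelled at least the braking
distance from `v_l` over the same duration. If `v_f ≤ v_l`, the second braking distance dominates
the first. If `v_f > v_l`, their difference is at most `(v_f² - v_l²) / (-2a)`, because the
follower's remaining speed at time `S` is at least the leader's (`integral_brake_sub_le`).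
If `u` is not integrable, its integral is zero by convention and the bound is immediate.
-/

open MeasureTheory

/-- The paper's HV safe-separation distance
`s_hv(v_f, v_l) = 1{v_f > v_l}·(v_f² - v_l²)/(-2a) + v_max·T_r + s_min`. -/
noncomputable def sHV (a T_r s_min v_max v_f v_l : ℝ) : ℝ :=
  (if v_f > v_l then (v_f ^ 2 - v_l ^ 2) / (-2 * a) else 0) + v_max * T_r + s_min

open intervalIntegral

theorem hasDerivAt_max_zero_sq (x : ℝ) :
    HasDerivAt (fun y : ℝ => (max 0 y) ^ 2) (2 * max 0 x) x := by
  have key : ∀ y : ℝ, y ≠ 0 → HasDerivAt (fun y : ℝ => (max 0 y) ^ 2) (2 * max 0 y) y := by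
    intro y hy
    rcases lt_or_gt_of_ne hy with h | h
    · rw [max_eq_left h.le, mul_zero]
      refine (hasDerivAt_const y (0 : ℝ)).congr_of_eventuallyEq ?_
      filter_upwards [eventually_lt_nhds h] with z hz
      simp [max_eq_left hz.le]
    · rw [max_eq_right h.le]
      have h2 : HasDerivAt (fun y : ℝ => y ^ 2) (2 * y) y := by
        simpa using hasDerivAt_pow 2 y
      refine h2.congr_of_eventuallyEq ?_
      filter_upwards [eventually_gt_nhds h] with z hz
      simp [max_eq_right hz.le]
  -- At the kink `0`, continuity of the candidate derivative gives differentiability.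
  rcases eq_or_ne x 0 with rfl | hx
  · exact hasDerivAt_of_hasDerivAt_of_ne key
      (by fun_prop) (by fun_prop)
  · exact key x hx

theorem continuous_brake (a v : ℝ) : Continuous fun t : ℝ => max 0 (v + a * t) := by
  fun_prop

/-- Distance travelled in time `S` when braking at rate `-a` from speed `v`. -/
theorem integral_brake {a v : ℝ} (ha : a < 0) (hv : 0 ≤ v) (S : ℝ) :
    ∫ t in (0 : ℝ)..S, max 0 (v + a * t) = (v ^ 2 - (max 0 (v + a * S)) ^ 2) / (-2 * a) := by
  have ha' : a ≠ 0 := ha.ne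
  have hd : ∀ t ∈ Set.uIcc 0 S,
      HasDerivAt (fun t => (max 0 (v + a * t)) ^ 2 / (2 * a)) (max 0 (v + a * t)) t := by
    intro t _
    have h1 : HasDerivAt (fun t : ℝ => v + a * t) a t := by
      simpa using ((hasDerivAt_id t).const_mul a).const_add v
    have h2 := ((hasDerivAt_max_zero_sq (v + a * t)).comp t h1).div_const (2 * a)
    exact h2.congr_deriv (by field_simp)
  rw [integral_eq_sub_of_hasDerivAt hd ((continuous_brake a v).intervalIntegrable _ _)]
  simp only [mul_zero, add_zero, max_eq_right hv]
  field_simp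
  ring

/-- Over equal braking durations, the follower gains at most the speed-dependent part of `sHV`. -/
theorem integral_brake_sub_le {a v_f v_l S : ℝ} (ha : a < 0) (hvf : 0 ≤ v_f) (hvl : 0 ≤ v_l)
    (hS : 0 ≤ S) :
    (∫ t in (0 : ℝ)..S, max 0 (v_f + a * t)) - ∫ t in (0 : ℝ)..S, max 0 (v_l + a * t) ≤
      if v_f > v_l then (v_f ^ 2 - v_l ^ 2) / (-2 * a) else 0 := by
  split_ifs with h
  · rw [integral_brake ha hvf, integral_brake ha hvl, ← sub_div]
    have hp : (max 0 (v_l + a * S)) ^ 2 ≤ (max 0 (v_f + a * S)) ^ 2 := by gcongr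
    exact div_le_div_of_nonneg_right (by linarith) (by linarith)
  · rw [sub_nonpos]
    refine integral_mono_on hS ((continuous_brake a v_f).intervalIntegrable _ _)
      ((continuous_brake a v_l).intervalIntegrable _ _) fun t _ => ?_
    have := not_lt.1 h
    gcongr

/-- An HV follower (speed `u`, reaction time `T_r`, speed limit
`v_max`, braking bound `a < 0`) whose initial gap `g` to its leader (speed `w`,
dominating the maximal-braking profile) satisfies `g ≥ s_hv(v_f, v_l)` never
comes within distance `s_min` of the leader: for every `T ≥ 0`,
`g + ∫₀ᵀ w - ∫₀ᵀ u ≥ s_min`. (The leader's speed, being an actual speed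
profile, is assumed interval integrable.) -/
theorem hv_follower_safe (a T_r s_min v_max v_l v_f g : ℝ)
    (ha : a < 0) (hTr : 0 ≤ T_r) (hsmin : 0 ≤ s_min) (hvmax : 0 ≤ v_max)
    (hvl : 0 ≤ v_l) (hvf : 0 ≤ v_f)
    (u w : ℝ → ℝ) (humeas : Measurable u) (hwmeas : Measurable w)
    (hu1 : ∀ t : ℝ, 0 ≤ t → t ≤ T_r → 0 ≤ u t ∧ u t ≤ v_max)
    (hu2 : ∀ t : ℝ, T_r ≤ t → u t ≤ max 0 (v_f + a * (t - T_r)))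
    (hw1 : ∀ t : ℝ, 0 ≤ t → max 0 (v_l + a * t) ≤ w t)
    (hwint : ∀ T : ℝ, 0 ≤ T → IntervalIntegrable w volume 0 T)
    (hg : sHV a T_r s_min v_max v_f v_l ≤ g) :
    ∀ T : ℝ, 0 ≤ T →
      s_min ≤ g + (∫ t in (0 : ℝ)..T, w t) - ∫ t in (0 : ℝ)..T, u t := by
  intro T hT
  have hVT : 0 ≤ v_max * T_r := mul_nonneg hvmax hTr
  unfold sHV at hg
  set D : ℝ := if v_f > v_l then (v_f ^ 2 - v_l ^ 2) / (-2 * a) else 0 with hD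
  have hD0 : 0 ≤ D := by
    -- This is the case of braking duration `0`.
    have h := integral_brake_sub_le ha hvf hvl le_rfl
    rwa [integral_same, integral_same, sub_self] at h
  have hw_nonneg : ∀ t, 0 ≤ t → 0 ≤ w t := fun t ht => (le_max_left _ _).trans (hw1 t ht)
  have hw0 : 0 ≤ ∫ t in (0 : ℝ)..T, w t :=
    integral_nonneg hT fun t ht => hw_nonneg t ht.1
  by_cases hui : IntervalIntegrable u volume 0 T
  swap
  · rw [integral_undef hui]
    linarith
  -- Bound on the distance covered by the follower within the reaction time.
  have hreact : ∀ R, 0 ≤ R → R ≤ T_r → IntervalIntegrable u volume 0 R →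
      ∫ t in (0 : ℝ)..R, u t ≤ v_max * T_r := by
    intro R hR hRT hint
    calc ∫ t in (0 : ℝ)..R, u t ≤ ∫ _ in (0 : ℝ)..R, v_max :=
          integral_mono_on hR hint intervalIntegrable_const
            fun t ht => (hu1 t ht.1 (ht.2.trans hRT)).2
      _ = v_max * R := by simp [mul_comm]
      _ ≤ v_max * T_r := by gcongr
  rcases le_total T T_r with hTT | hTT
  · have := hreact T hT hTT hui
    linarith
  have hsub : 0 ≤ T - T_r := sub_nonneg.2 hTT
  have hu_a : IntervalIntegrable u volume 0 T_r :=
    hui.mono_set (by rw [Set.uIcc_of_le hTr, Set.uIcc_of_le hT]; exact Set.Icc_subset_Icc_right hTT)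
  have hu_b : IntervalIntegrable u volume T_r T :=
    hui.mono_set (by rw [Set.uIcc_of_le hTT, Set.uIcc_of_le hT]; exact Set.Icc_subset_Icc_left hTr)
  have h1 := hreact T_r hTr le_rfl hu_a
  have h2 : ∫ t in T_r..T, u t ≤ ∫ t in (0 : ℝ)..(T - T_r), max 0 (v_f + a * t) := by
    have hshift := integral_comp_sub_right (a := T_r) (b := T)
      (fun t : ℝ => max 0 (v_f + a * t)) T_r
    rw [sub_self] at hshift
    rw [← hshift]
    exact integral_mono_on hTT hu_b (Continuous.intervalIntegrable (by fun_prop) _ _)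
      fun t ht => hu2 t ht.1
  -- The leader's distance after time `T - T_r` is discarded.
  have h3 : ∫ t in (0 : ℝ)..(T - T_r), max 0 (v_l + a * t) ≤ ∫ t in (0 : ℝ)..T, w t := by
    calc ∫ t in (0 : ℝ)..(T - T_r), max 0 (v_l + a * t)
        ≤ ∫ t in (0 : ℝ)..T, max 0 (v_l + a * t) := by
          rw [← integral_add_adjacent_intervals
            ((continuous_brake a v_l).intervalIntegrable 0 (T - T_r))
            ((continuous_brake a v_l).intervalIntegrable (T - T_r) T)]
          exact le_add_of_nonneg_right
            (integral_nonneg (by linarith) fun t _ => le_max_left _ _)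
      _ ≤ ∫ t in (0 : ℝ)..T, w t :=
          integral_mono_on hT ((continuous_brake a v_l).intervalIntegrable _ _) (hwint T hT)
            fun t ht => hw1 t ht.1
  have h4 := integral_brake_sub_le ha hvf hvl hsub
  rw [← hD] at h4
  rw [← integral_add_adjacent_intervals hu_a hu_b]
  linarith
end

section
/- Let a < 0, h > 0, T_r ≥ 0, s_min ≥ 0, v_max ≥ 0 and 0 ≤ v ≤ v_max be real numbers. If d_C ≥ v_max²/(−2a) + v_max·h − a·h²/2 + v_max·T_r + s_min, then Σ_{k=0}^{∞} max(0, v + k·a·h) · h ≤ d_C − s_min. (Hence an AV entering the communication zone at speed at most v_max and applying maximal per-slot braking stops at least s_min before entering the intersection.) -/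
/-! A potential argument. To each speed `w` assign the potential
`Φ w = (max 0 (w + c / 2))² / (-2a)`, where `c = -a h` is the speed lost in one slot. One slot of
travel at speed `w` is paid for by the drop of potential:
`max 0 w * h + Φ (w - c) ≤ Φ w` (`slot_add_potential_le`), with equality for `w ≥ c / 2`.
Telescoping, every partial sum of the displacement is at most
`Φ v = v² / (-2a) + v h / 2 - a h² / 8`, which is below the assumed bound since `v ≤ v_max`. -/

/-- An upper bound for the distance still to be travelled from speed `w` under per-slot braking
with `a < 0`. The shift `-a * h / 2` accounts for the speed being held constant within a slot. -/
noncomputable def brakingPotential (a h w : ℝ) : ℝ :=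
  (max 0 (w - a * h / 2)) ^ 2 / (-2 * a)

theorem brakingPotential_nonneg {a : ℝ} (ha : a < 0) (h w : ℝ) : 0 ≤ brakingPotential a h w :=
  div_nonneg (sq_nonneg _) (by linarith)

theorem slot_add_potential_le {a h : ℝ} (ha : a < 0) (hh : 0 < h) (w : ℝ) :
    max 0 w * h + brakingPotential a h (w + a * h) ≤ brakingPotential a h w := by
  have hah : a * h < 0 := mul_neg_of_neg_of_pos ha hh
  have ha2 : 0 < -2 * a := by linarith
  unfold brakingPotential
  rw [← le_sub_iff_add_le, ← sub_div, le_div_iff₀ ha2]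
  rcases le_total w 0 with hw | hw
  · rw [max_eq_left hw, max_eq_left (by linarith : w + a * h - a * h / 2 ≤ 0)]
    nlinarith [sq_nonneg (max 0 (w - a * h / 2))]
  · rw [max_eq_right hw, max_eq_right (by linarith : 0 ≤ w - a * h / 2)]
    rcases le_total (w + a * h - a * h / 2) 0 with hneg | hneg
    · rw [max_eq_left hneg]
      -- The remaining potential vanishes; the inequality is a perfect square.
      nlinarith [sq_nonneg (w + a * h / 2)]
    · rw [max_eq_right hneg]
      nlinarith

theorem partial_sum_add_potential_le {a h : ℝ} (ha : a < 0) (hh : 0 < h) (v : ℝ) (n : ℕ) :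
    (∑ k ∈ Finset.range n, max 0 (v + (k : ℝ) * a * h) * h)
      + brakingPotential a h (v + (n : ℝ) * a * h) ≤ brakingPotential a h v := by
  induction n with
  | zero => simp
  | succ n ih =>
    have key := slot_add_potential_le ha hh (v + (n : ℝ) * a * h)
    have e : v + ((n + 1 : ℕ) : ℝ) * a * h = v + (n : ℝ) * a * h + a * h := by
      push_cast; ring
    rw [Finset.sum_range_succ, e]
    linarith

/-- If the communication range satisfies
`d_C ≥ v_max²/(-2a) + v_max·h - a·h²/2 + v_max·T_r + s_min`, then an AV
entering the communication zone at speed `v ≤ v_max` and applying maximal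
per-slot braking travels at most `d_C - s_min`, i.e. it stops at least
`s_min` before entering the intersection. -/
theorem av_stops_within_communication_zone (a h T_r s_min v_max v d_C : ℝ)
    (ha : a < 0) (hh : 0 < h) (hTr : 0 ≤ T_r) (hsmin : 0 ≤ s_min)
    (hvmax : 0 ≤ v_max) (hv0 : 0 ≤ v) (hv1 : v ≤ v_max)
    (hdC : v_max ^ 2 / (-2 * a) + v_max * h - a * h ^ 2 / 2 + v_max * T_r + s_min
      ≤ d_C) :
    (∑' k : ℕ, max 0 (v + (k : ℝ) * a * h) * h) ≤ d_C - s_min := by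
  refine Real.tsum_le_of_sum_range_le
    (fun k => mul_nonneg (le_max_left _ _) hh.le) (fun n => ?_)
  have h1 := partial_sum_add_potential_le ha hh v n
  have h2 := brakingPotential_nonneg ha h (v + (n : ℝ) * a * h)
  have hah : a * h < 0 := mul_neg_of_neg_of_pos ha hh
  have h3 : brakingPotential a h v = v ^ 2 / (-2 * a) + v * h / 2 - a * h ^ 2 / 8 := by
    have ha0 : a ≠ 0 := ha.ne
    unfold brakingPotential
    rw [max_eq_right (by linarith : 0 ≤ v - a * h / 2)]
    field_simp
    ring
  have h4 : v ^ 2 / (-2 * a) ≤ v_max ^ 2 / (-2 * a) :=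
    div_le_div_of_nonneg_right (pow_le_pow_left₀ hv0 hv1 2) (by linarith)
  have h5 : v * h ≤ v_max * h := mul_le_mul_of_nonneg_right hv1 hh.le
  have h6 : 0 ≤ v_max * h := mul_nonneg hvmax hh.le
  have h7 : a * h ^ 2 ≤ 0 := mul_nonpos_of_nonpos_of_nonneg ha.le (sq_nonneg h)
  have h8 : 0 ≤ v_max * T_r := mul_nonneg hvmax hTr
  linarith
end

section
/- Let a < 0, h > 0 and s_min ≥ 0 be real numbers, and define s(u, w) := (if u > w then (u² − w²)/(−2a) + (u − w)·h − a·h²/2 else 0) + s_min. Let v ≥ 0, v_ro ≥ 0 and g be real numbers with g ≥ s(v, v_ro). Set u := max(0, v + a·h), and let w be any real number with w ≥ max(0, v_ro + a·h). Then g + (w − u)·h ≥ s(u, w). -/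
/-!
Write `d = -a h > 0`. If the next follower velocity `u = max 0 (v + a h)` does not exceed `w`, the
required separation is only `s_min`, which `s(v, v_ro)` dominates (`smin_le_sAV`), and the
gap does not shrink. If `u > w ≥ 0`, then `u = v - d` is unclipped and `v > v_ro`, so both
separations take their quadratic form; after multiplication by `-2a` the claim is equivalent to
`(v_ro + d)² ≤ (w + 2d)²`, which holds because `0 ≤ v_ro ≤ w + d`
(`quadratic_step`).
-/

/-- The paper's AV–AV safe-separation distance
`s(u, w) = 1{u > w}·[(u² - w²)/(-2a) + (u - w)·h - a·h²/2] + s_min`. -/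
noncomputable def sAV (a h s_min u w : ℝ) : ℝ :=
  (if u > w then (u ^ 2 - w ^ 2) / (-2 * a) + (u - w) * h - a * h ^ 2 / 2 else 0)
    + s_min

theorem smin_le_sAV {a h s_min u w : ℝ} (ha : a < 0) (hh : 0 < h) (hw : 0 ≤ w) :
    s_min ≤ sAV a h s_min u w := by
  unfold sAV
  split_ifs with huw
  · have h1 : 0 ≤ (u ^ 2 - w ^ 2) / (-2 * a) := div_nonneg (by nlinarith) (by linarith)
    have h2 : 0 ≤ (u - w) * h := mul_nonneg (by linarith) hh.le
    have h3 : a * h ^ 2 ≤ 0 := mul_nonpos_of_nonpos_of_nonneg ha.le (sq_nonneg h)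
    linarith
  · linarith

/-- The comparison of the two quadratic separations when the follower's velocity `v + a h` is
unclipped; the slack is `((w + 2d)² - (r + d)²) / (-2a)` with `d = -a h`. -/
theorem quadratic_step {a h v r w : ℝ} (ha : a < 0) (hh : 0 < h) (hr : 0 ≤ r) (hw : 0 ≤ w)
    (hrw : r + a * h ≤ w) :
    ((v + a * h) ^ 2 - w ^ 2) / (-2 * a) + 2 * ((v + a * h - w) * h)
      ≤ (v ^ 2 - r ^ 2) / (-2 * a) + (v - r) * h := by
  have hah : a * h < 0 := mul_neg_of_neg_of_pos ha hh
  have slack : (v ^ 2 - r ^ 2) / (-2 * a) + (v - r) * h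
      - (((v + a * h) ^ 2 - w ^ 2) / (-2 * a) + 2 * ((v + a * h - w) * h))
      = ((w - a * h - r) * (w - 3 * (a * h) + r)) / (-2 * a) := by
    have := ha.ne
    field_simp
    ring
  have : 0 ≤ ((w - a * h - r) * (w - 3 * (a * h) + r)) / (-2 * a) :=
    div_nonneg (mul_nonneg (by linarith) (by linarith)) (by linarith)
  linarith

/-- Single-step invariance of the AV safe-separation invariant:
if the gap `g` satisfies `g ≥ s(v, v_ro)`, the follower brakes maximally to
`u = max 0 (v + a·h)`, and the leader holds any admissible velocity
`w ≥ max 0 (v_ro + a·h)`, then the next gap satisfies `g + (w - u)·h ≥ s(u, w)`. -/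
theorem av_one_step_invariance (a h s_min v v_ro g : ℝ)
    (ha : a < 0) (hh : 0 < h) (hsmin : 0 ≤ s_min)
    (hv : 0 ≤ v) (hvro : 0 ≤ v_ro)
    (hg : sAV a h s_min v v_ro ≤ g) :
    ∀ w : ℝ, max 0 (v_ro + a * h) ≤ w →
      sAV a h s_min (max 0 (v + a * h)) w ≤ g + (w - max 0 (v + a * h)) * h := by
  intro w hw
  have hw0 : 0 ≤ w := (le_max_left _ _).trans hw
  have hwr : v_ro + a * h ≤ w := (le_max_right _ _).trans hw
  by_cases huw : max 0 (v + a * h) > w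
  -- Since `w ≥ 0`, the maximum exceeds `w` only through its second argument.
  · have hvw : w < v + a * h := (lt_max_iff.mp huw).resolve_left hw0.not_gt
    rw [max_eq_right (hw0.trans hvw.le)]
    have hvr : v > v_ro := by linarith
    have key := quadratic_step (v := v) ha hh hvro hw0 hwr
    simp only [sAV, if_pos hvr] at hg
    simp only [sAV, if_pos (show v + a * h > w from hvw)]
    linarith
  · have hg0 := (smin_le_sAV ha hh hvro).trans hg
    have h1 : 0 ≤ (w - max 0 (v + a * h)) * h :=
      mul_nonneg (sub_nonneg.mpr (not_lt.mp huw)) hh.le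
    simp only [sAV, if_neg huw]
    linarith
end

section
/- Let a < 0, h > 0, s_min ≥ 0, a_max ≥ 0 and v_max ≥ 0 be real numbers, and define s(u, w) := (if u > w then (u² − w²)/(−2a) + (u − w)·h − a·h²/2 else 0) + s_min. Let 0 ≤ v ≤ v_max, v_ro ≥ 0 and g be real numbers with g ≥ s(v, v_ro). Then there exists a velocity u with max(0, v + a·h) ≤ u ≤ min(v_max, v + a_max·h) such that for every w ≥ max(0, v_ro + a·h), g + (w − u)·h ≥ s(u, w). (In particular, the MPC safety constraints always admit a feasible control input, namely maximal braking.) -/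
/-- The braking estimate behind feasibility: the two sides are the `w`-dependent part of what the
next slot demands of `g` and the corresponding part of `s(v, r)`, with `-a h²/2 + s_min` removed
from both. The difference is `(w - (r + a h)) (w + r - 3 a h) / (-2a)`. -/
lemma braking_bound {a h v r w : ℝ} (ha : a < 0) (hh : 0 < h) (hr : 0 ≤ r)
    (hw0 : 0 ≤ w) (hwr : r + a * h ≤ w) :
    ((v + a * h) ^ 2 - w ^ 2) / (-2 * a) + 2 * (v + a * h - w) * h
      ≤ (v ^ 2 - r ^ 2) / (-2 * a) + (v - r) * h := by
  have h2a : 0 < -2 * a := by linarith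
  have key : 0 ≤ w ^ 2 - 4 * a * h * w - r ^ 2 + 2 * a * h * r + 3 * (a * h) ^ 2 := by
    have hah : a * h < 0 := mul_neg_of_neg_of_pos ha hh
    have hp := mul_nonneg (sub_nonneg.2 hwr) (by linarith : 0 ≤ w + r - 3 * (a * h))
    linarith
  have e : (v ^ 2 - r ^ 2) / (-2 * a) + (v - r) * h
      - (((v + a * h) ^ 2 - w ^ 2) / (-2 * a) + 2 * (v + a * h - w) * h)
      = (w ^ 2 - 4 * a * h * w - r ^ 2 + 2 * a * h * r + 3 * (a * h) ^ 2) / (-2 * a) := by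
    have := ha.ne
    field_simp
    ring
  have := div_nonneg key h2a.le
  linarith

/-- Feasibility of the MPC safety constraints: if the gap `g`
satisfies `g ≥ s(v, v_ro)`, then there is an admissible next-slot velocity
`u ∈ [max 0 (v + a·h), min v_max (v + a_max·h)]` such that for every
admissible leader velocity `w ≥ max 0 (v_ro + a·h)`, the next gap satisfies
`g + (w - u)·h ≥ s(u, w)`. -/
theorem mpc_feasibility (a h s_min a_max v_max v v_ro g : ℝ)
    (ha : a < 0) (hh : 0 < h) (hsmin : 0 ≤ s_min)
    (hamax : 0 ≤ a_max) (hvmax : 0 ≤ v_max)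
    (hv0 : 0 ≤ v) (hv1 : v ≤ v_max) (hvro : 0 ≤ v_ro)
    (hg : sAV a h s_min v v_ro ≤ g) :
    ∃ u : ℝ, max 0 (v + a * h) ≤ u ∧ u ≤ min v_max (v + a_max * h) ∧
      ∀ w : ℝ, max 0 (v_ro + a * h) ≤ w →
        sAV a h s_min u w ≤ g + (w - u) * h := by
  have hah : a * h < 0 := mul_neg_of_neg_of_pos ha hh
  have hmh : 0 ≤ a_max * h := mul_nonneg hamax hh.le
  have hah2 : 0 ≤ -a * h ^ 2 := mul_nonneg (by linarith) (sq_nonneg h)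
  refine ⟨max 0 (v + a * h), le_rfl,
    max_le (le_min hvmax (by linarith)) (le_min (by linarith) (by linarith)), ?_⟩
  intro w hw
  obtain ⟨hw0, hwr⟩ := max_le_iff.1 hw
  unfold sAV at hg ⊢
  by_cases huw : max 0 (v + a * h) > w
  · have hu : w < v + a * h := (lt_max_iff.1 huw).resolve_left (not_lt.2 hw0)
    rw [max_eq_right (by linarith)] at huw ⊢
    rw [if_pos huw]
    rw [if_pos (by linarith : v > v_ro)] at hg
    have := braking_bound (v := v) ha hh hvro hw0 hwr
    linarith
  · rw [if_neg huw]
    have hwu : 0 ≤ (w - max 0 (v + a * h)) * h :=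
      mul_nonneg (sub_nonneg.2 (not_lt.1 huw)) hh.le
    have hgs : s_min ≤ g := by
      split_ifs at hg with hv
      · have h1 : 0 ≤ (v ^ 2 - v_ro ^ 2) / (-2 * a) :=
          div_nonneg (sub_nonneg.2 (pow_le_pow_left₀ hvro hv.le 2)) (by linarith)
        have h2 : 0 ≤ (v - v_ro) * h := mul_nonneg (by linarith) hh.le
        linarith
      · linarith
    linarith
end
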